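/- arXiv:1311.7167 — 2 statements merged into one kernel-verified Lean document; each statement's English description precedes it below -/
import Mathlib

section
/- Let r and t be positive integers with r not divisible by 3. Then the congruence lattices 𝓛 = 𝓛(r²t; 1, 1+rt, 1+3rt) and 𝓛' = 𝓛(r²t; 1, 1−rt, 1−3rt) in ℤ³ are ‖·‖₁*-isospectral; that is, for every k ∈ ℕ and every z with 0 ≤ z ≤ 3, N_𝓛(k,z) = N_{𝓛'}(k,z). -/
/-- The congruence lattice `𝓛(q; s₁, …, s_m) = {a ∈ ℤ^m : ∑ aⱼsⱼ ≡ 0 (mod q)}`. -/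
def congLat (q m : ℕ) (s : Fin m → ℤ) : Set (Fin m → ℤ) :=
  {a | (q : ℤ) ∣ ∑ j, a j * s j}

/-- `N_𝓛(k, z)`: the number of `μ ∈ 𝓛` with `‖μ‖₁ = k` and exactly `z` zero coordinates. -/
noncomputable def NL (q m : ℕ) (s : Fin m → ℤ) (k z : ℕ) : ℕ :=
  Nat.card {a : Fin m → ℤ // a ∈ congLat q m s ∧ (∑ j, (a j).natAbs) = k ∧
    (Finset.univ.filter fun j => a j = 0).card = z}

section

open Finset

theorem sum_range_mul_period {r : ℕ} [NeZero r] (m : ℕ) (f : ZMod r → ℤ) :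
    ∑ j ∈ range (r * m), f j = m * ∑ x, f x := by
  induction m with
  | zero => simp
  | succ m ih =>
    have hblock : ∑ j ∈ range r, f ((r * m + j : ℕ) : ZMod r) = ∑ x, f x := by
      refine Finset.sum_bij' (fun j _ => (j : ZMod r)) (fun x _ => x.val) ?_ ?_ ?_ ?_ ?_
      · simp
      · intro x _
        simpa using ZMod.val_lt x
      · intro j hj
        exact ZMod.val_natCast_of_lt (by simpa using hj)
      · simp
      · simp
    rw [mul_add, mul_one, sum_range_add, ih, hblock]
    push_cast
    ring

/-- The sum of `f (b + 3 * c)` over the pairs `0 < b`, `0 ≤ c` with `b + c < n`. -/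
def triangleSum {r : ℕ} (n : ℕ) (f : ZMod r → ℤ) : ℤ :=
  ∑ c ∈ range n, ∑ b ∈ range (n - c - 1), f ((b : ZMod r) + 1 + 3 * c)

theorem triangleSum_sub_shift {r : ℕ} [NeZero r] (h3 : ¬ 3 ∣ r) (m : ℕ) (f : ZMod r → ℤ) :
    triangleSum (r * m) f - triangleSum (r * m) (fun x => f (x + 1)) =
      m * (∑ x, f x) - m * ∑ x, f (2 * x) := by
  have hu : IsUnit (3 : ZMod r) := by
    have := (ZMod.isUnit_iff_coprime 3 r).2 ((Nat.Prime.coprime_iff_not_dvd Nat.prime_three).2 h3)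
    simpa using this
  obtain ⟨u, hu⟩ := hu
  have htel : triangleSum (r * m) f - triangleSum (r * m) (fun x => f (x + 1)) =
      ∑ c ∈ range (r * m), (f (1 + 3 * (c : ZMod r)) - f (2 * (c : ZMod r))) := by
    unfold triangleSum
    rw [← sum_sub_distrib]
    refine sum_congr rfl fun c hc => ?_
    have hc' : c < r * m := by simpa using hc
    rw [← sum_sub_distrib]
    have := sum_range_sub' (fun b : ℕ => f ((b : ZMod r) + 1 + 3 * c)) (r * m - c - 1)
    have hn : ((r * m - c - 1 : ℕ) : ZMod r) = - c - 1 := by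
      rw [Nat.sub_sub, Nat.cast_sub (by omega)]
      push_cast
      simp
      ring
    rw [hn] at this
    convert this using 3
    · refine congrArg f ?_
      push_cast
      ring
    · simp
    · ring
  rw [htel, sum_sub_distrib, sum_range_mul_period m (fun x => f (1 + 3 * x)),
    sum_range_mul_period m (fun x => f (2 * x)), ← hu]
  congr 2
  exact Equiv.sum_comp ((Units.mulLeft u).trans (Equiv.addLeft 1)) f

theorem sum_even_add_sum_odd {r : ℕ} [NeZero r] (f : ZMod r → ℤ) :
    ∑ x, f (2 * x) + ∑ x, f (1 + 2 * x) = 2 * ∑ x, f x := by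
  have h1 := sum_range_mul_period 1 (fun x : ZMod r => f (2 * x))
  have h2 := sum_range_mul_period 1 (fun x : ZMod r => f (1 + 2 * x))
  have h3 := sum_range_mul_period 2 f
  have key : ∀ n : ℕ, ∑ j ∈ range (n * 2), f j =
      ∑ j ∈ range n, f (2 * (j : ZMod r)) + ∑ j ∈ range n, f (1 + 2 * (j : ZMod r)) := by
    intro n
    induction n with
    | zero => simp
    | succ n ih =>
      rw [add_mul, one_mul, sum_range_succ, sum_range_succ, ih, sum_range_succ, sum_range_succ]
      have e1 : ((n * 2 : ℕ) : ZMod r) = 2 * n := by push_cast; ring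
      have e2 : ((n * 2 + 1 : ℕ) : ZMod r) = 1 + 2 * n := by push_cast; ring
      rw [e1, e2]
      ring
  rw [key] at h3
  simp only [mul_one, Nat.cast_one, one_mul] at h1 h2
  rw [h1, h2] at h3
  simpa using h3

theorem triangleSum_neg {r : ℕ} [NeZero r] (h3 : ¬ 3 ∣ r) (m : ℕ) (f : ZMod r → ℤ) :
    triangleSum (r * m) (fun x => f (-x)) = triangleSum (r * m) f := by
  have hshift : ∀ g : ZMod r → ℤ,
      triangleSum (r * m) (fun x => g (x + 1)) - triangleSum (r * m) (fun x => g (-x + 1)) =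
        triangleSum (r * m) g - triangleSum (r * m) (fun x => g (-x)) := by
    intro g
    have e1 := triangleSum_sub_shift h3 m g
    have e2 := triangleSum_sub_shift h3 m (fun x => g (-x + 1))
    have e3 := sum_even_add_sum_odd g
    have e4 : ∑ x : ZMod r, g (-x + 1) = ∑ x, g x :=
      Equiv.sum_comp ((Equiv.neg (ZMod r)).trans (Equiv.addRight 1)) g
    have e5 : ∑ x : ZMod r, g (-(2 * x) + 1) = ∑ x, g (1 + 2 * x) := by
      rw [← Equiv.sum_comp (Equiv.neg (ZMod r))]
      refine sum_congr rfl fun x _ => ?_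
      congr 1
      simp only [Equiv.neg_apply]
      ring
    rw [e4, e5] at e2
    have e6 : (fun x : ZMod r => g (-(x + 1) + 1)) = fun x => g (-x) := by
      funext x
      congr 1
      ring
    simp only [e6] at e2
    linear_combination (m : ℤ) * e3 - e1 - e2
  have hshift' : ∀ v : ℕ,
      triangleSum (r * m) (fun x : ZMod r => f (x + v)) -
          triangleSum (r * m) (fun x : ZMod r => f (-x + v)) =
        triangleSum (r * m) f - triangleSum (r * m) (fun x => f (-x)) := by
    intro v
    induction v with
    | zero => simp
    | succ v ih =>
      rw [← ih, ← hshift fun x => f (x + v)]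
      push_cast
      simp only [add_assoc, add_comm (1 : ZMod r)]
  have htrans : ∀ y : ZMod r, ∑ v : ZMod r, f (y + v) = ∑ v, f v := fun y =>
    Equiv.sum_comp (Equiv.addLeft y) f
  have hconst : ∑ v : ZMod r, (triangleSum (r * m) (fun x => f (x + v)) -
      triangleSum (r * m) (fun x => f (-x + v))) = 0 := by
    rw [sum_sub_distrib, sub_eq_zero]
    unfold triangleSum
    rw [sum_comm, sum_comm (s := univ)]
    refine sum_congr rfl fun c _ => ?_
    rw [sum_comm, sum_comm (s := univ)]
    refine sum_congr rfl fun b _ => ?_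
    rw [htrans, htrans]
  have hall : ∀ v : ZMod r, triangleSum (r * m) (fun x => f (x + v)) -
      triangleSum (r * m) (fun x => f (-x + v)) =
        triangleSum (r * m) f - triangleSum (r * m) (fun x => f (-x)) := by
    intro v
    simpa using hshift' v.val
  rw [sum_congr rfl fun v _ => hall v] at hconst
  simp only [sum_const, card_univ, ZMod.card, nsmul_eq_mul, mul_eq_zero,
    NeZero.ne, false_or] at hconst
  linarith

/-- The sum of `f (b + 3 * c)` over the pairs `0 < b`, `0 < c` with `b + c < n`. -/
def openTriangleSum {r : ℕ} (n : ℕ) (f : ZMod r → ℤ) : ℤ :=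
  ∑ c ∈ range (n - 1), ∑ b ∈ range (n - (c + 1) - 1), f ((b : ZMod r) + 1 + 3 * (c + 1))

theorem openTriangleSum_neg {r : ℕ} [NeZero r] (h3 : ¬ 3 ∣ r) (m : ℕ) (f : ZMod r → ℤ) :
    openTriangleSum (r * m) (fun x => f (-x)) = openTriangleSum (r * m) f := by
  obtain hn | hn := Nat.eq_zero_or_pos (r * m)
  · simp [openTriangleSum, hn]
  have hsplit : ∀ g : ZMod r → ℤ, triangleSum (r * m) g =
      openTriangleSum (r * m) g + ∑ b ∈ range (r * m - 1), g ((b : ZMod r) + 1) := by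
    intro g
    unfold triangleSum openTriangleSum
    obtain ⟨n, hn'⟩ : ∃ n, r * m = n + 1 := ⟨r * m - 1, by omega⟩
    rw [hn', sum_range_succ']
    simp
  have hedge : ∑ b ∈ range (r * m - 1), f (-((b : ZMod r) + 1)) =
      ∑ b ∈ range (r * m - 1), f ((b : ZMod r) + 1) := by
    rw [← sum_range_reflect]
    refine sum_congr rfl fun b hb => ?_
    have hb' : b < r * m - 1 := by simpa using hb
    rw [Nat.sub_sub, Nat.sub_sub, Nat.cast_sub (by omega)]
    congr 1
    push_cast
    simp
    ring
  have := triangleSum_neg h3 m f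
  rw [hsplit, hsplit, hedge] at this
  linarith

theorem card_positive_triples {r : ℕ} (n : ℕ) (v : ZMod r) :
    (Nat.card {p : ℤ × ℤ × ℤ // (0 < p.1 ∧ 0 < p.2.1 ∧ 0 < p.2.2) ∧ p.1 + p.2.1 + p.2.2 = n ∧
      ((p.2.1 + 3 * p.2.2 : ℤ) : ZMod r) = v} : ℤ) =
      openTriangleSum n fun x => if x = v then 1 else 0 := by
  classical
  let S : Finset (Σ _ : ℕ, ℕ) :=
    ((range (n - 1)).sigma fun c => range (n - (c + 1) - 1)).filter
      fun q => (q.2 : ZMod r) + 1 + 3 * (q.1 + 1) = v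
  let g : (Σ _ : ℕ, ℕ) → ℤ × ℤ × ℤ := fun q => ((n : ℤ) - q.1 - q.2 - 2, (q.2 : ℤ) + 1, (q.1 : ℤ) + 1)
  have hg : Function.Injective g := by
    rintro ⟨c, b⟩ ⟨c', b'⟩ h
    simp only [g, Prod.mk.injEq] at h
    obtain rfl : c = c' := by omega
    obtain rfl : b = b' := by omega
    rfl
  have hcard := Nat.subtype_card (p := fun p : ℤ × ℤ × ℤ => (0 < p.1 ∧ 0 < p.2.1 ∧ 0 < p.2.2) ∧
      p.1 + p.2.1 + p.2.2 = n ∧ ((p.2.1 + 3 * p.2.2 : ℤ) : ZMod r) = v) (S.image g) (by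
    rintro ⟨a, b, c⟩
    simp only [S, g, mem_image, mem_filter, mem_sigma, mem_range, Prod.mk.injEq, Sigma.exists]
    constructor
    · rintro ⟨c', b', ⟨⟨h1, h2⟩, h3⟩, rfl, rfl, rfl⟩
      refine ⟨by omega, by ring, ?_⟩
      push_cast
      exact h3
    · rintro ⟨⟨ha, hb, hc⟩, hs, hv⟩
      obtain ⟨b', rfl⟩ : ∃ b' : ℕ, b = b' + 1 := ⟨(b - 1).toNat, by omega⟩
      obtain ⟨c', rfl⟩ : ∃ c' : ℕ, c = c' + 1 := ⟨(c - 1).toNat, by omega⟩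
      refine ⟨c', b', ⟨by omega, ?_⟩, by omega, rfl, rfl⟩
      push_cast at hv
      exact hv)
  rw [hcard, card_image_of_injective _ hg, card_filter, sum_sigma]
  simp [openTriangleSum]

end

/-- `T` divides `x + y + w`, and `r` divides `ε * h + α * x + β * y + γ * w` for a quotient `h`. -/
def ShiftedMem (r T α β γ ε : ℤ) (p : ℤ × ℤ × ℤ) : Prop :=
  ∃ h, p.1 + p.2.1 + p.2.2 = T * h ∧ r ∣ ε * h + α * p.1 + β * p.2.1 + γ * p.2.2

/-- The one-norm on triples of integers. -/
def tripleNorm (p : ℤ × ℤ × ℤ) : ℤ := |p.1| + |p.2.1| + |p.2.2|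

theorem finite_tripleNorm_eq (k : ℤ) : {p : ℤ × ℤ × ℤ | tripleNorm p = k}.Finite := by
  refine (Set.finite_Icc ((-k, -k, -k) : ℤ × ℤ × ℤ) (k, k, k)).subset ?_
  rintro ⟨x, y, w⟩ h
  simp only [Set.mem_ofPred_eq, tripleNorm] at h
  simp only [Set.mem_Icc, Prod.mk_le_mk]
  have h1 := abs_nonneg x
  have h2 := abs_nonneg y
  have h3 := abs_nonneg w
  refine ⟨⟨?_, ?_, ?_⟩, ?_, ?_, ?_⟩ <;>
    linarith [le_abs_self x, le_abs_self y, le_abs_self w, neg_abs_le x, neg_abs_le y, neg_abs_le w]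

theorem card_shiftedMem_positive {r : ℕ} [NeZero r] (h3 : ¬ 3 ∣ r) {t : ℕ} (ht : 1 ≤ t) (k : ℕ)
    (ε : ℤ) :
    Nat.card {p // ShiftedMem r (r * t) 0 1 3 ε p ∧ tripleNorm p = k ∧
      0 < p.1 ∧ 0 < p.2.1 ∧ 0 < p.2.2} =
    Nat.card {p // ShiftedMem r (r * t) 0 1 3 (-ε) p ∧ tripleNorm p = k ∧
      0 < p.1 ∧ 0 < p.2.1 ∧ 0 < p.2.2} := by
  have hT : (0 : ℤ) < r * t := by
    have := Nat.pos_of_neZero r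
    positivity
  by_cases hk : r * t ∣ k
  · obtain ⟨h, rfl⟩ := hk
    have hiff : ∀ (δ : ℤ) (p : ℤ × ℤ × ℤ),
        (ShiftedMem r (r * t) 0 1 3 δ p ∧ tripleNorm p = (r * t * h : ℕ) ∧
          0 < p.1 ∧ 0 < p.2.1 ∧ 0 < p.2.2) ↔
        (0 < p.1 ∧ 0 < p.2.1 ∧ 0 < p.2.2) ∧ p.1 + p.2.1 + p.2.2 = (r * (t * h) : ℕ) ∧
          ((p.2.1 + 3 * p.2.2 : ℤ) : ZMod r) = ((-(δ * h) : ℤ) : ZMod r) := by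
      rintro δ ⟨a, b, c⟩
      simp only [ShiftedMem, tripleNorm]
      constructor
      · rintro ⟨⟨h', hs, hd⟩, hn, ha, hb, hc⟩
        rw [abs_of_pos ha, abs_of_pos hb, abs_of_pos hc] at hn
        obtain rfl : h' = h := by
          rw [hn] at hs
          push_cast at hs
          exact (mul_left_cancel₀ hT.ne' hs).symm
        refine ⟨⟨ha, hb, hc⟩, by rw [hn, mul_assoc], ?_⟩
        rw [← sub_eq_zero, ← Int.cast_sub, ZMod.intCast_zmod_eq_zero_iff_dvd]
        convert hd using 1
        ring
      · rintro ⟨⟨ha, hb, hc⟩, hn, hv⟩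
        rw [abs_of_pos ha, abs_of_pos hb, abs_of_pos hc]
        rw [← sub_eq_zero, ← Int.cast_sub, ZMod.intCast_zmod_eq_zero_iff_dvd] at hv
        refine ⟨⟨h, by rw [hn]; push_cast; ring, ?_⟩, by rw [hn, mul_assoc], ha, hb, hc⟩
        convert hv using 1
        ring
    simp only [hiff]
    rw [← Nat.cast_inj (R := ℤ), card_positive_triples, card_positive_triples,
      ← openTriangleSum_neg h3]
    congr 1
    funext x
    push_cast
    simp only [neg_mul, neg_neg, neg_inj]
  · have hempty : ∀ δ : ℤ, Nat.card {p // ShiftedMem r (r * t) 0 1 3 δ p ∧ tripleNorm p = k ∧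
        0 < p.1 ∧ 0 < p.2.1 ∧ 0 < p.2.2} = 0 := by
      intro δ
      rw [Nat.card_eq_zero]
      left
      refine ⟨?_⟩
      rintro ⟨⟨a, b, c⟩, ⟨h, hs, -⟩, hn, ha, hb, hc⟩
      simp only [tripleNorm] at hs hn ha hb hc
      rw [abs_of_pos ha, abs_of_pos hb, abs_of_pos hc] at hn
      refine hk (Int.natCast_dvd_natCast.1 ⟨h, ?_⟩)
      rw [← hn, hs]
      push_cast
      rfl
    rw [hempty, hempty]

theorem ShiftedMem.neg {r T α β γ ε : ℤ} {p : ℤ × ℤ × ℤ} (hp : ShiftedMem r T α β γ ε p) :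
    ShiftedMem r T α β γ ε (-p) := by
  obtain ⟨h, hs, hd⟩ := hp
  refine ⟨-h, ?_, ?_⟩
  · simp only [Prod.fst_neg, Prod.snd_neg]
    linear_combination -hs
  · simp only [Prod.fst_neg, Prod.snd_neg]
    refine hd.neg_right.trans (dvd_of_eq ?_)
    ring

theorem tripleNorm_neg (p : ℤ × ℤ × ℤ) : tripleNorm (-p) = tripleNorm p := by
  simp [tripleNorm]

theorem card_shiftedMem_negative (r T α β γ ε : ℤ) (k : ℕ) :
    Nat.card {p // ShiftedMem r T α β γ ε p ∧ tripleNorm p = k ∧ p.1 < 0 ∧ p.2.1 < 0 ∧ p.2.2 < 0} =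
    Nat.card {p // ShiftedMem r T α β γ ε p ∧ tripleNorm p = k ∧
      0 < p.1 ∧ 0 < p.2.1 ∧ 0 < p.2.2} := by
  refine Nat.card_congr ((Equiv.neg (ℤ × ℤ × ℤ)).subtypeEquiv fun p => ?_)
  have hmem : ShiftedMem r T α β γ ε (-p) ↔ ShiftedMem r T α β γ ε p :=
    ⟨fun h => by simpa using h.neg, fun h => h.neg⟩
  simp [hmem, tripleNorm_neg]

theorem card_shiftedMem_swap {r T α β γ ε : ℤ} (hrT : r ∣ T) (k : ℕ) :
    Nat.card {p // ShiftedMem r T α β γ ε p ∧ tripleNorm p = k ∧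
      p.1 ≠ 0 ∧ p.2.1 ≠ 0 ∧ p.2.2 = 0} =
    Nat.card {p // ShiftedMem r T α β γ (-ε) p ∧ tripleNorm p = k ∧
      p.1 ≠ 0 ∧ p.2.1 ≠ 0 ∧ p.2.2 = 0} := by
  let e : ℤ × ℤ × ℤ ≃ ℤ × ℤ × ℤ :=
    { toFun := fun p => (p.2.1, p.1, p.2.2)
      invFun := fun p => (p.2.1, p.1, p.2.2)
      left_inv := fun _ => rfl
      right_inv := fun _ => rfl }
  have key : ∀ δ x y : ℤ, ShiftedMem r T α β γ δ (x, y, 0) →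
      ShiftedMem r T α β γ (-δ) (y, x, 0) := by
    rintro δ x y ⟨h, hs, hd⟩
    refine ⟨h, by simpa [add_comm] using hs, ?_⟩
    have hM : r ∣ (α + β) * (x + y + 0) := (hs ▸ hrT.mul_right h).mul_left _
    refine (dvd_sub hM hd).trans (dvd_of_eq ?_)
    ring
  refine Nat.card_congr (e.subtypeEquiv ?_)
  rintro ⟨x, y, w⟩
  simp only [e, Equiv.coe_fn_mk, tripleNorm]
  constructor
  · rintro ⟨hm, hn, hx, hy, rfl⟩
    exact ⟨key _ _ _ hm, by rw [← hn]; ring, hy, hx, rfl⟩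
  · rintro ⟨hm, hn, hy, hx, rfl⟩
    exact ⟨by simpa using key _ _ _ hm, by rw [← hn]; ring, hx, hy, rfl⟩

theorem fmod_bounds_of_pos (a : ℤ) {m : ℤ} (hm : 0 < m) : 0 ≤ a.fmod m ∧ a.fmod m < m :=
  ⟨Int.fmod_nonneg_of_pos a hm, Int.fmod_lt_of_pos a hm⟩

theorem fmod_bounds_of_neg (a : ℤ) {m : ℤ} (hm : m < 0) : m < a.fmod m ∧ a.fmod m ≤ 0 := by
  have h := fmod_bounds_of_pos (-a) (neg_pos.2 hm)
  rw [Int.neg_fmod_neg] at h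
  omega

theorem fmod_fmod_sub_cancel (a s m : ℤ) : ((a + s).fmod m - s).fmod m = a.fmod m := by
  rw [sub_eq_add_neg, Int.fmod_add_fmod, add_neg_cancel_right]

/-- On triples whose last coordinate has the sign opposite to that of the first two, this reflects
the second coordinate when it is smaller in size than the last one, and otherwise rotates it by
`e * ((x + y + w) / T)` inside the remaining full periods. -/
def mixedMap (T e : ℤ) (p : ℤ × ℤ × ℤ) : ℤ × ℤ × ℤ :=
  let M := p.1 + p.2.1 + p.2.2
  if |p.2.1| < |p.2.2| then (p.2.1 + p.2.2, -p.2.1, p.1 + p.2.1)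
  else
    let R := (p.2.1 + p.2.2 + e * (M / T)).fmod M
    (M - R, R - p.2.2, p.2.2)

theorem mixedMap_spec (T e : ℤ) {p : ℤ × ℤ × ℤ} (hxy : 0 < p.1 * p.2.1) (hxw : p.1 * p.2.2 < 0) :
    tripleNorm (mixedMap T e p) = tripleNorm p ∧
      0 < (mixedMap T e p).1 * (mixedMap T e p).2.1 ∧
      (mixedMap T e p).1 * (mixedMap T e p).2.2 < 0 ∧
      mixedMap T (-e) (mixedMap T e p) = p := by
  obtain ⟨x, y, w⟩ := p
  simp only at hxy hxw
  obtain ⟨hx, hy⟩ | ⟨hx, hy⟩ := mul_pos_iff.1 hxy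
  · have hw : w < 0 := by nlinarith
    by_cases hlt : |y| < |w|
    · have hval : ∀ d, mixedMap T d (x, y, w) = (y + w, -y, x + y) := fun d => by
        simp [mixedMap, hlt]
      rw [abs_of_pos hy, abs_of_neg hw] at hlt
      have hback : mixedMap T (-e) (y + w, -y, x + y) = (x, y, w) := by
        have : |-y| < |x + y| := by rw [abs_neg, abs_of_pos hy, abs_of_pos (by omega)]; omega
        simp only [mixedMap, if_pos this, Prod.mk.injEq]
        exact ⟨by ring, by ring, by ring⟩
      rw [hval, hback]
      simp only [tripleNorm, abs_neg, and_true]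
      rw [abs_of_pos hy, abs_of_neg hw, abs_of_pos hx, abs_of_neg (show y + w < 0 by omega),
        abs_of_pos (show 0 < x + y by omega)]
      exact ⟨by ring, by nlinarith, by nlinarith⟩
    · obtain ⟨R, hR⟩ : ∃ R, R = (y + w + e * ((x + y + w) / T)).fmod (x + y + w) := ⟨_, rfl⟩
      have hval : mixedMap T e (x, y, w) = (x + y + w - R, R - w, w) := by
        simp [mixedMap, hlt, hR]
      rw [abs_of_pos hy, abs_of_neg hw] at hlt
      have hb := fmod_bounds_of_pos (y + w + e * ((x + y + w) / T)) (show 0 < x + y + w by omega)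
      rw [← hR] at hb
      have hback : mixedMap T (-e) (x + y + w - R, R - w, w) = (x, y, w) := by
        have hge : ¬ |R - w| < |w| := by
          rw [abs_of_pos (show 0 < R - w by omega), abs_of_neg hw]; omega
        have hM : x + y + w - R + (R - w) + w = x + y + w := by ring
        have hR' : (R + -e * ((x + y + w) / T)).fmod (x + y + w) = y + w := by
          rw [hR, neg_mul, ← sub_eq_add_neg, fmod_fmod_sub_cancel,
            Int.fmod_eq_of_lt (by omega) (by omega)]
        simp only [mixedMap, if_neg hge, hM, sub_add_cancel, hR']
        simp
      rw [hval, hback]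
      simp only [tripleNorm, and_true]
      rw [abs_of_pos hy, abs_of_neg hw, abs_of_pos hx, abs_of_pos (show 0 < R - w by omega),
        abs_of_pos (show 0 < x + y + w - R by omega)]
      exact ⟨by ring, mul_pos (by omega) (by omega), mul_neg_of_pos_of_neg (by omega) hw⟩
  · have hw : 0 < w := by nlinarith
    by_cases hlt : |y| < |w|
    · have hval : ∀ d, mixedMap T d (x, y, w) = (y + w, -y, x + y) := fun d => by
        simp [mixedMap, hlt]
      rw [abs_of_neg hy, abs_of_pos hw] at hlt
      have hback : mixedMap T (-e) (y + w, -y, x + y) = (x, y, w) := by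
        have : |-y| < |x + y| := by rw [abs_neg, abs_of_neg hy, abs_of_neg (by omega)]; omega
        simp only [mixedMap, if_pos this, Prod.mk.injEq]
        exact ⟨by ring, by ring, by ring⟩
      rw [hval, hback]
      simp only [tripleNorm, abs_neg, and_true]
      rw [abs_of_neg hy, abs_of_pos hw, abs_of_neg hx, abs_of_pos (show 0 < y + w by omega),
        abs_of_neg (show x + y < 0 by omega)]
      exact ⟨by ring, by nlinarith, by nlinarith⟩
    · obtain ⟨R, hR⟩ : ∃ R, R = (y + w + e * ((x + y + w) / T)).fmod (x + y + w) := ⟨_, rfl⟩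
      have hval : mixedMap T e (x, y, w) = (x + y + w - R, R - w, w) := by
        simp [mixedMap, hlt, hR]
      rw [abs_of_neg hy, abs_of_pos hw] at hlt
      have hb := fmod_bounds_of_neg (y + w + e * ((x + y + w) / T)) (show x + y + w < 0 by omega)
      rw [← hR] at hb
      have hback : mixedMap T (-e) (x + y + w - R, R - w, w) = (x, y, w) := by
        have hge : ¬ |R - w| < |w| := by
          rw [abs_of_neg (show R - w < 0 by omega), abs_of_pos hw]; omega
        have hM : x + y + w - R + (R - w) + w = x + y + w := by ring
        have hR' : (R + -e * ((x + y + w) / T)).fmod (x + y + w) = y + w := by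
          rw [hR, neg_mul, ← sub_eq_add_neg, fmod_fmod_sub_cancel, ← neg_inj,
            ← Int.neg_fmod_neg, Int.fmod_eq_of_lt (by omega) (by omega)]
        simp only [mixedMap, if_neg hge, hM, sub_add_cancel, hR']
        simp
      rw [hval, hback]
      simp only [tripleNorm, and_true]
      rw [abs_of_neg hy, abs_of_pos hw, abs_of_neg hx, abs_of_neg (show R - w < 0 by omega),
        abs_of_neg (show x + y + w - R < 0 by omega)]
      exact ⟨by ring, mul_pos_of_neg_of_neg (by omega) (by omega),
        mul_neg_of_neg_of_pos (by omega) hw⟩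

theorem ShiftedMem.mixedMap {r T α β γ ε e : ℤ} (hT : T ≠ 0) (hrT : r ∣ T)
    (he : r ∣ (β - α) * e - 2) {p : ℤ × ℤ × ℤ} (hp : ShiftedMem r T α β γ ε p) :
    ShiftedMem r T α β γ (-ε) (mixedMap T (ε * e) p) := by
  obtain ⟨x, y, w⟩ := p
  obtain ⟨h, hs, hd⟩ := hp
  simp only at hs hd
  have hM : r ∣ x + y + w := hs ▸ hrT.mul_right h
  by_cases hlt : |y| < |w|
  · simp only [_root_.mixedMap, if_pos hlt]
    refine ⟨h, by linear_combination hs, ?_⟩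
    refine (dvd_sub (hM.mul_left (α + γ)) hd).trans (dvd_of_eq ?_)
    ring
  · have hquot : (x + y + w) / T = h := by rw [hs, Int.mul_ediv_cancel_left _ hT]
    simp only [_root_.mixedMap, if_neg hlt, hquot, Int.fmod_def]
    refine ⟨h, by linear_combination hs, ?_⟩
    have h1 := hM.mul_left ((α - β) * (y + w + ε * e * h).fdiv (x + y + w))
    refine (dvd_add (dvd_add hd h1) (he.mul_left (ε * h))).trans (dvd_of_eq ?_)
    ring

theorem card_shiftedMem_mixed {r T α β γ ε e : ℤ} (hT : T ≠ 0) (hrT : r ∣ T)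
    (he : r ∣ (β - α) * e - 2) (k : ℕ) :
    Nat.card {p // ShiftedMem r T α β γ ε p ∧ tripleNorm p = k ∧
      0 < p.1 * p.2.1 ∧ p.1 * p.2.2 < 0} =
    Nat.card {p // ShiftedMem r T α β γ (-ε) p ∧ tripleNorm p = k ∧
      0 < p.1 * p.2.1 ∧ p.1 * p.2.2 < 0} := by
  have hmaps : ∀ (δ : ℤ) (p : ℤ × ℤ × ℤ), (ShiftedMem r T α β γ δ p ∧ tripleNorm p = k ∧
      0 < p.1 * p.2.1 ∧ p.1 * p.2.2 < 0) →
      ShiftedMem r T α β γ (-δ) (mixedMap T (δ * e) p) ∧ tripleNorm (mixedMap T (δ * e) p) = k ∧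
      0 < (mixedMap T (δ * e) p).1 * (mixedMap T (δ * e) p).2.1 ∧
      (mixedMap T (δ * e) p).1 * (mixedMap T (δ * e) p).2.2 < 0 := by
    rintro δ p ⟨hm, hn, hxy, hxw⟩
    obtain ⟨h1, h2, h3, -⟩ := mixedMap_spec T (δ * e) hxy hxw
    exact ⟨hm.mixedMap hT hrT he, h1.trans hn, h2, h3⟩
  refine Nat.card_congr
    { toFun := fun p => ⟨mixedMap T (ε * e) p, hmaps ε p p.2⟩
      invFun := fun p => ⟨mixedMap T (-ε * e) p, by simpa using hmaps (-ε) p p.2⟩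
      left_inv := ?_
      right_inv := ?_ }
  · rintro ⟨p, hm, hn, hxy, hxw⟩
    simpa using (mixedMap_spec T (ε * e) hxy hxw).2.2.2
  · rintro ⟨p, hm, hn, hxy, hxw⟩
    simpa using (mixedMap_spec T (-ε * e) hxy hxw).2.2.2

theorem natCard_eq_of_split {α : Type*} {P Q : α → Prop} (C : α → Prop)
    (hP : {a | P a}.Finite) (hQ : {a | Q a}.Finite)
    (h₁ : Nat.card {a // P a ∧ C a} = Nat.card {a // Q a ∧ C a})
    (h₂ : Nat.card {a // P a ∧ ¬ C a} = Nat.card {a // Q a ∧ ¬ C a}) :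
    Nat.card {a // P a} = Nat.card {a // Q a} := by
  have hsplit : ∀ R : α → Prop, {a | R a}.Finite →
      Nat.card {a // R a} = Nat.card {a // R a ∧ C a} + Nat.card {a // R a ∧ ¬ C a} := by
    intro R hR
    exact (Set.ncard_inter_add_ncard_sdiff_eq_ncard {a | R a} {a | C a} hR).symm
  rw [hsplit P hP, hsplit Q hQ, h₁, h₂]

/-- The number of zero coordinates of a triple. -/
def tripleZeros (p : ℤ × ℤ × ℤ) : ℕ :=
  (if p.1 = 0 then 1 else 0) + (if p.2.1 = 0 then 1 else 0) + if p.2.2 = 0 then 1 else 0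

theorem tripleZeros_eq_zero_iff (p : ℤ × ℤ × ℤ) :
    tripleZeros p = 0 ↔ p.1 ≠ 0 ∧ p.2.1 ≠ 0 ∧ p.2.2 ≠ 0 := by
  simp [tripleZeros, and_assoc]

theorem tripleZeros_eq_one_iff (p : ℤ × ℤ × ℤ) :
    tripleZeros p = 1 ↔ (p.1 ≠ 0 ∧ p.2.1 ≠ 0 ∧ p.2.2 = 0) ∨ (p.1 ≠ 0 ∧ p.2.2 ≠ 0 ∧ p.2.1 = 0) ∨
      (p.2.1 ≠ 0 ∧ p.2.2 ≠ 0 ∧ p.1 = 0) := by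
  by_cases h₁ : p.1 = 0 <;> by_cases h₂ : p.2.1 = 0 <;> by_cases h₃ : p.2.2 = 0 <;>
    simp [tripleZeros, h₁, h₂, h₃]

theorem mem_congLat_iff_shiftedMem {r t : ℕ} (hr : 1 ≤ r) (ht : 1 ≤ t) {ε : ℤ} (hε : ε * ε = 1)
    (a : Fin 3 → ℤ) :
    a ∈ congLat (r ^ 2 * t) 3 ![1, 1 + ε * (r * t), 1 + ε * (3 * (r * t))] ↔
      ShiftedMem r (r * t) 0 1 3 ε (a 0, a 1, a 2) := by
  have hT : (r * t : ℤ) ≠ 0 := by positivity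
  simp only [congLat, ShiftedMem, Set.mem_ofPred_eq, Fin.sum_univ_three, Matrix.cons_val]
  constructor
  · rintro ⟨c, hc⟩
    refine ⟨r * c - ε * (a 1 + 3 * a 2), ?_, ε * c, ?_⟩
    · push_cast at hc
      linear_combination hc
    · linear_combination -(a 1 + 3 * a 2) * hε
  · rintro ⟨h, hs, c, hc⟩
    refine ⟨ε * c, ?_⟩
    push_cast
    linear_combination hs + ε * (r * t) * hc - r * t * h * hε

theorem NL_eq_card_triples {r t : ℕ} (hr : 1 ≤ r) (ht : 1 ≤ t) {ε : ℤ} (hε : ε * ε = 1) (k z : ℕ) :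
    NL (r ^ 2 * t) 3 ![1, 1 + ε * (r * t), 1 + ε * (3 * (r * t))] k z =
      Nat.card {p // (ShiftedMem r (r * t) 0 1 3 ε p ∧ tripleNorm p = k) ∧ tripleZeros p = z} := by
  let e : (Fin 3 → ℤ) ≃ ℤ × ℤ × ℤ :=
    { toFun := fun a => (a 0, a 1, a 2)
      invFun := fun p => ![p.1, p.2.1, p.2.2]
      left_inv := fun a => by ext i; fin_cases i <;> rfl
      right_inv := fun _ => rfl }
  refine Nat.card_congr (e.subtypeEquiv fun a => ?_)
  rw [mem_congLat_iff_shiftedMem hr ht hε, and_assoc]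
  refine and_congr Iff.rfl (and_congr ?_ ?_)
  · change _ ↔ |a 0| + |a 1| + |a 2| = (k : ℤ)
    rw [Fin.sum_univ_three, Int.abs_eq_natAbs, Int.abs_eq_natAbs, Int.abs_eq_natAbs]
    omega
  · rw [Finset.card_filter, Fin.sum_univ_three]
    rfl

theorem natCard_congr_and {α : Type*} {P Q C D : α → Prop} (h : ∀ a, C a ↔ D a)
    (hPQ : Nat.card {a // P a ∧ D a} = Nat.card {a // Q a ∧ D a}) :
    Nat.card {a // P a ∧ C a} = Nat.card {a // Q a ∧ C a} := by
  simpa only [h] using hPQ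

/-- Moves the second entry of a triple to the last place. -/
def swapLast : ℤ × ℤ × ℤ ≃ ℤ × ℤ × ℤ where
  toFun p := (p.1, p.2.2, p.2.1)
  invFun p := (p.1, p.2.2, p.2.1)
  left_inv _ := rfl
  right_inv _ := rfl

/-- Moves the first entry of a triple to the last place. -/
def rotateTriple : ℤ × ℤ × ℤ ≃ ℤ × ℤ × ℤ where
  toFun p := (p.2.1, p.2.2, p.1)
  invFun p := (p.2.2, p.1, p.2.1)
  left_inv _ := rfl
  right_inv _ := rfl

theorem shiftedMem_swapLast {r T α β γ ε : ℤ} (p : ℤ × ℤ × ℤ) :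
    ShiftedMem r T α γ β ε (swapLast p) ↔ ShiftedMem r T α β γ ε p := by
  simp only [ShiftedMem, swapLast, Equiv.coe_fn_mk]
  refine exists_congr fun h => ?_
  rw [add_right_comm p.1, add_right_comm (ε * h + α * p.1)]

theorem shiftedMem_rotateTriple {r T α β γ ε : ℤ} (p : ℤ × ℤ × ℤ) :
    ShiftedMem r T β γ α ε (rotateTriple p) ↔ ShiftedMem r T α β γ ε p := by
  simp only [ShiftedMem, rotateTriple, Equiv.coe_fn_mk]
  refine exists_congr fun h => ?_
  rw [show p.2.1 + p.2.2 + p.1 = p.1 + p.2.1 + p.2.2 by ring,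
    show ε * h + β * p.2.1 + γ * p.2.2 + α * p.1 = ε * h + α * p.1 + β * p.2.1 + γ * p.2.2 by ring]

theorem tripleNorm_swapLast (p : ℤ × ℤ × ℤ) : tripleNorm (swapLast p) = tripleNorm p :=
  add_right_comm _ _ _

theorem tripleNorm_rotateTriple (p : ℤ × ℤ × ℤ) : tripleNorm (rotateTriple p) = tripleNorm p := by
  simp only [tripleNorm, rotateTriple, Equiv.coe_fn_mk]
  ring

theorem card_shiftedMem_swapLast (r T α β γ ε : ℤ) (k : ℕ) (C : ℤ × ℤ × ℤ → Prop) :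
    Nat.card {p // ShiftedMem r T α β γ ε p ∧ tripleNorm p = k ∧ C (swapLast p)} =
      Nat.card {p // ShiftedMem r T α γ β ε p ∧ tripleNorm p = k ∧ C p} :=
  Nat.card_congr <| swapLast.subtypeEquiv fun p => by
    rw [shiftedMem_swapLast, tripleNorm_swapLast]

theorem card_shiftedMem_rotateTriple (r T α β γ ε : ℤ) (k : ℕ) (C : ℤ × ℤ × ℤ → Prop) :
    Nat.card {p // ShiftedMem r T α β γ ε p ∧ tripleNorm p = k ∧ C (rotateTriple p)} =
      Nat.card {p // ShiftedMem r T β γ α ε p ∧ tripleNorm p = k ∧ C p} :=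
  Nat.card_congr <| rotateTriple.subtypeEquiv fun p => by
    rw [shiftedMem_rotateTriple, tripleNorm_rotateTriple]

theorem shiftedMem_neg_of_two_zeros {r T α β γ ε : ℤ} (hrT : r ∣ T) {p : ℤ × ℤ × ℤ}
    (hz : 2 ≤ tripleZeros p) (hp : ShiftedMem r T α β γ ε p) : ShiftedMem r T α β γ (-ε) p := by
  obtain ⟨x, y, w⟩ := p
  obtain ⟨h, hs, hd⟩ := hp
  simp only at hs hd
  have hM : r ∣ x + y + w := hs ▸ hrT.mul_right h
  have hlin : ∃ δ, α * x + β * y + γ * w = δ * (x + y + w) := by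
    by_cases hx : x = 0 <;> by_cases hy : y = 0 <;> by_cases hw : w = 0 <;>
      simp [tripleZeros, hx, hy, hw] at hz ⊢
  obtain ⟨δ, hδ⟩ := hlin
  refine ⟨h, hs, (dvd_sub (hM.mul_left (2 * δ)) hd).trans (dvd_of_eq ?_)⟩
  simp only
  linear_combination -2 * hδ

theorem card_triples_neg {r : ℕ} [NeZero r] (h3 : ¬ 3 ∣ r) {t : ℕ} (ht : 1 ≤ t) (k z : ℕ) (ε : ℤ) :
    Nat.card {p // (ShiftedMem r (r * t) 0 1 3 ε p ∧ tripleNorm p = k) ∧ tripleZeros p = z} =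
    Nat.card {p // (ShiftedMem r (r * t) 0 1 3 (-ε) p ∧ tripleNorm p = k) ∧ tripleZeros p = z} := by
  have hT : (r * t : ℤ) ≠ 0 := by
    have := NeZero.ne r
    positivity
  have hrT : (r : ℤ) ∣ r * t := dvd_mul_right _ _
  have hfin : ∀ (δ : ℤ) (C : ℤ × ℤ × ℤ → Prop),
      {p | (ShiftedMem r (r * t) 0 1 3 δ p ∧ tripleNorm p = k) ∧ C p}.Finite := fun δ C =>
    (finite_tripleNorm_eq k).subset fun p hp => hp.1.2
  obtain ⟨u, hu⟩ : ∃ u : ℤ, (r : ℤ) ∣ 3 * u - 2 := by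
    have hcop : IsCoprime (3 : ℤ) r :=
      Nat.isCoprime_iff_coprime.2 ((Nat.Prime.coprime_iff_not_dvd Nat.prime_three).2 h3)
    obtain ⟨a, b, hab⟩ := hcop
    exact ⟨2 * a, -2 * b, by linear_combination 2 * hab⟩
  have hsplit : ∀ C D : ℤ × ℤ × ℤ → Prop,
      Nat.card {p // (ShiftedMem r (r * t) 0 1 3 ε p ∧ tripleNorm p = k) ∧ C p ∧ D p} =
        Nat.card {p // (ShiftedMem r (r * t) 0 1 3 (-ε) p ∧ tripleNorm p = k) ∧ C p ∧ D p} →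
      Nat.card {p // (ShiftedMem r (r * t) 0 1 3 ε p ∧ tripleNorm p = k) ∧ C p ∧ ¬ D p} =
        Nat.card {p // (ShiftedMem r (r * t) 0 1 3 (-ε) p ∧ tripleNorm p = k) ∧ C p ∧ ¬ D p} →
      Nat.card {p // (ShiftedMem r (r * t) 0 1 3 ε p ∧ tripleNorm p = k) ∧ C p} =
        Nat.card {p // (ShiftedMem r (r * t) 0 1 3 (-ε) p ∧ tripleNorm p = k) ∧ C p} := by
    intro C D h₁ h₂
    refine natCard_eq_of_split D (hfin _ _) (hfin _ _) ?_ ?_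
    · simpa only [and_assoc] using h₁
    · simpa only [and_assoc] using h₂
  obtain hz | rfl | rfl : 2 ≤ z ∨ z = 1 ∨ z = 0 := by omega
  · refine Nat.card_congr (Equiv.subtypeEquivRight fun p => ?_)
    constructor
    · rintro ⟨⟨hm, hn⟩, rfl⟩
      exact ⟨⟨shiftedMem_neg_of_two_zeros hrT hz hm, hn⟩, rfl⟩
    · rintro ⟨⟨hm, hn⟩, rfl⟩
      exact ⟨⟨by simpa using shiftedMem_neg_of_two_zeros hrT hz hm, hn⟩, rfl⟩
  · refine hsplit _ (fun p => p.2.2 = 0) ?_ (hsplit _ (fun p => p.2.1 = 0) ?_ ?_)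
    · refine natCard_congr_and (D := fun p => p.1 ≠ 0 ∧ p.2.1 ≠ 0 ∧ p.2.2 = 0) (fun p => ?_) ?_
      · simp only [tripleZeros_eq_one_iff]; tauto
      · simp only [and_assoc]
        exact card_shiftedMem_swap hrT k
    · refine natCard_congr_and
        (D := fun p => (swapLast p).1 ≠ 0 ∧ (swapLast p).2.1 ≠ 0 ∧ (swapLast p).2.2 = 0)
        (fun p => ?_) ?_
      · simp only [tripleZeros_eq_one_iff, swapLast, Equiv.coe_fn_mk]; tauto
      · simp only [and_assoc]
        have h := card_shiftedMem_swapLast r (r * t) 0 1 3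
        exact (h ε k _).trans ((card_shiftedMem_swap hrT k).trans (h (-ε) k _).symm)
    · refine natCard_congr_and
        (D := fun p => (rotateTriple p).1 ≠ 0 ∧ (rotateTriple p).2.1 ≠ 0 ∧
          (rotateTriple p).2.2 = 0)
        (fun p => ?_) ?_
      · simp only [tripleZeros_eq_one_iff, rotateTriple, Equiv.coe_fn_mk]; tauto
      · simp only [and_assoc]
        have h := card_shiftedMem_rotateTriple r (r * t) 0 1 3
        exact (h ε k _).trans ((card_shiftedMem_swap hrT k).trans (h (-ε) k _).symm)
  · refine natCard_congr_and tripleZeros_eq_zero_iff ?_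
    refine hsplit _ (fun p => 0 < p.1 ∧ 0 < p.2.1 ∧ 0 < p.2.2) ?_
      (hsplit _ (fun p => p.1 < 0 ∧ p.2.1 < 0 ∧ p.2.2 < 0) ?_
        (hsplit _ (fun p => 0 < p.1 * p.2.1) ?_ (hsplit _ (fun p => 0 < p.1 * p.2.2) ?_ ?_)))
    · refine natCard_congr_and (D := fun p => 0 < p.1 ∧ 0 < p.2.1 ∧ 0 < p.2.2)
        (fun p => by omega) ?_
      simp only [and_assoc]
      exact card_shiftedMem_positive h3 ht k ε
    · refine natCard_congr_and (D := fun p => p.1 < 0 ∧ p.2.1 < 0 ∧ p.2.2 < 0)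
        (fun p => by omega) ?_
      simp only [and_assoc]
      rw [card_shiftedMem_negative, card_shiftedMem_negative]
      exact card_shiftedMem_positive h3 ht k ε
    · refine natCard_congr_and (D := fun p => 0 < p.1 * p.2.1 ∧ p.1 * p.2.2 < 0) (fun p => ?_) ?_
      · simp only [mul_pos_iff, mul_neg_iff]
        omega
      · simp only [and_assoc]
        exact card_shiftedMem_mixed (e := 2) hT hrT (by simp) k
    · refine natCard_congr_and
        (D := fun p => 0 < (swapLast p).1 * (swapLast p).2.1 ∧
          (swapLast p).1 * (swapLast p).2.2 < 0) (fun p => ?_) ?_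
      · simp only [swapLast, Equiv.coe_fn_mk, mul_pos_iff, mul_neg_iff]
        omega
      · simp only [and_assoc]
        have h := card_shiftedMem_swapLast r (r * t) 0 1 3
        exact (h ε k _).trans
          ((card_shiftedMem_mixed (e := u) hT hrT (by simpa using hu) k).trans (h (-ε) k _).symm)
    · refine natCard_congr_and
        (D := fun p => 0 < (rotateTriple p).1 * (rotateTriple p).2.1 ∧
          (rotateTriple p).1 * (rotateTriple p).2.2 < 0) (fun p => ?_) ?_
      · simp only [rotateTriple, Equiv.coe_fn_mk, mul_pos_iff, mul_neg_iff]
        omega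
      · simp only [and_assoc]
        have h := card_shiftedMem_rotateTriple r (r * t) 0 1 3
        exact (h ε k _).trans
          ((card_shiftedMem_mixed (e := 1) hT hrT (by norm_num) k).trans (h (-ε) k _).symm)

/-- For `r` not divisible by `3`, the congruence lattices `𝓛(r²t; 1, 1+rt, 1+3rt)` and
`𝓛(r²t; 1, 1-rt, 1-3rt)` are `‖·‖₁*`-isospectral. -/
theorem congLat_one_norm_star_isospectral (r t : ℕ) (hr : 1 ≤ r) (ht : 1 ≤ t)
    (h3 : ¬ (3 ∣ r)) (k z : ℕ) (hz : z ≤ 3) :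
    NL (r ^ 2 * t) 3 ![(1 : ℤ), 1 + (r : ℤ) * t, 1 + 3 * (r : ℤ) * t] k z =
      NL (r ^ 2 * t) 3 ![(1 : ℤ), 1 - (r : ℤ) * t, 1 - 3 * (r : ℤ) * t] k z := by
  have : NeZero r := ⟨by omega⟩
  have h := card_triples_neg h3 ht k z 1
  rw [← NL_eq_card_triples hr ht (by norm_num), ← NL_eq_card_triples hr ht (by norm_num)] at h
  simpa [mul_assoc, sub_eq_add_neg] using h
end

section
/- Let r and t be positive integers with r not divisible by 3, and let 𝓛 = 𝓛(r²t; 1, 1+rt, 1+3rt) and 𝓛' = 𝓛(r²t; 1, 1−rt, 1−3rt). Then for every k ∈ ℕ and every sign pattern (δ₁, δ₂, δ₃) ∈ {−1, +1}³, the number of (a₁,a₂,a₃) ∈ 𝓛 with δᵢ aᵢ > 0 for i = 1,2,3 and |a₁| + |a₂| + |a₃| = k equals the number of (a₁,a₂,a₃) ∈ 𝓛' with δᵢ aᵢ > 0 for i = 1,2,3 and |a₁| + |a₂| + |a₃| = k. -/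
open Finset

theorem sum_Ico_eq_of_periodic {f : ℤ → ℤ} {N : ℤ} (hN : 0 ≤ N) (hf : ∀ x, f (x + N) = f x)
    (x y : ℤ) : ∑ c ∈ Ico x (x + N), f c = ∑ c ∈ Ico y (y + N), f c := by
  have step : ∀ x, ∑ c ∈ Ico (x + 1) (x + 1 + N), f c = ∑ c ∈ Ico x (x + N), f c := by
    intro x
    have h₁ : insert x (Ico (x + 1) (x + 1 + N)) = insert (x + N) (Ico x (x + N)) := by
      ext z
      simp only [mem_insert, mem_Ico]
      omega
    have h₂ := congrArg (fun s => ∑ c ∈ s, f c) h₁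
    rw [sum_insert (by simp), sum_insert (by simp), hf] at h₂
    exact add_left_cancel h₂
  have base : ∀ x, ∑ c ∈ Ico x (x + N), f c = ∑ c ∈ Ico 0 (0 + N), f c := by
    intro x
    induction x using Int.induction_on with
    | zero => rfl
    | succ i ih => rw [step, ih]
    | pred i ih => rw [← ih, ← step]; simp
  rw [base x, base y]

theorem sum_Ico_shift_of_periodic {f : ℤ → ℤ} {N : ℤ} (hN : 0 ≤ N) (hf : ∀ x, f (x + N) = f x)
    (x y : ℤ) : ∑ c ∈ Ico x (x + N), f (c + y) = ∑ c ∈ Ico x (x + N), f c := by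
  rw [← sum_Ico_eq_of_periodic hN hf (x + y) x]
  refine sum_nbij' (· + y) (· - y) ?_ ?_ ?_ ?_ ?_ <;> simp <;> intros <;> omega

/-- Ordered pairs of positive integers with sum less than `k`, counted by rows. -/
theorem natCard_triangle_eq_sum (k : ℕ) (Q : ℤ → ℤ → Prop) [∀ p q, Decidable (Q p q)] :
    (Nat.card {x : ℤ × ℤ // (0 < x.1 ∧ 0 < x.2 ∧ x.1 + x.2 < k) ∧ Q x.1 x.2} : ℤ) =
      ∑ p ∈ Ico 1 (k : ℤ), ∑ q ∈ Ico 1 (k - p), if Q p q then 1 else 0 := by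
  have h : Nat.card {x : ℤ × ℤ // (0 < x.1 ∧ 0 < x.2 ∧ x.1 + x.2 < k) ∧ Q x.1 x.2} =
      Nat.card ((Ico 1 (k : ℤ)).sigma fun p => {q ∈ Ico 1 (k - p) | Q p q}) := by
    refine Nat.card_congr ⟨fun x => ⟨⟨x.1.1, x.1.2⟩, ?_⟩, fun x => ⟨(x.1.1, x.1.2), ?_⟩,
      fun _ => rfl, fun _ => rfl⟩
    · obtain ⟨⟨p, q⟩, h, hQ⟩ := x
      simp only [mem_sigma, mem_Ico, mem_filter] at h ⊢
      exact ⟨by omega, by omega, hQ⟩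
    · obtain ⟨⟨p, q⟩, h⟩ := x
      simp only [mem_sigma, mem_Ico, mem_filter] at h ⊢
      exact ⟨by omega, h.2.2⟩
  rw [h, Nat.card_eq_fintype_card, Fintype.card_coe]
  simp [card_sigma]

/-- The points of an open octant with one-norm `k`, parametrised by two absolute values. -/
theorem natCard_octant_eq_natCard_triangle (k : ℕ) (δ : Fin 3 → ℤ) (hδ : ∀ i, δ i = 1 ∨ δ i = -1)
    (R : (Fin 3 → ℤ) → Prop) (σ : Equiv.Perm (Fin 3)) :
    Nat.card {a : Fin 3 → ℤ // R a ∧ (∀ i, 0 < δ i * a i) ∧ (∑ i, (a i).natAbs) = k} =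
      Nat.card {x : ℤ × ℤ // (0 < x.1 ∧ 0 < x.2 ∧ x.1 + x.2 < k) ∧
        R fun i => δ i * ![x.1, k - x.1 - x.2, x.2] (σ i)} := by
  have hδδ : ∀ i z, δ i * (δ i * z) = z := by
    intro i z
    rcases hδ i with h | h <;> simp [h]
  have habs : ∀ i z, 0 < δ i * z → (z.natAbs : ℤ) = δ i * z := by
    intro i z
    rcases hδ i with h | h <;> rw [h] <;> omega
  have hsum : ∀ a : Fin 3 → ℤ, (∀ i, 0 < δ i * a i) → (∑ i, (a i).natAbs) = k →
      δ (σ.symm 0) * a (σ.symm 0) + δ (σ.symm 1) * a (σ.symm 1) +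
        δ (σ.symm 2) * a (σ.symm 2) = k := by
    intro a ha hk
    rw [← Fin.sum_univ_three (fun i => δ (σ.symm i) * a (σ.symm i)),
      Equiv.sum_comp σ.symm (fun i => δ i * a i), ← hk]
    push_cast
    exact sum_congr rfl fun i _ => (by simpa using (habs i _ (ha i)).symm)
  have hrec : ∀ a : Fin 3 → ℤ, (∀ i, 0 < δ i * a i) → (∑ i, (a i).natAbs) = k →
      (fun i => δ i * ![δ (σ.symm 0) * a (σ.symm 0),
        k - δ (σ.symm 0) * a (σ.symm 0) - δ (σ.symm 2) * a (σ.symm 2),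
        δ (σ.symm 2) * a (σ.symm 2)] (σ i)) = a := by
    intro a ha hk
    have h := hsum a ha hk
    ext i
    obtain ⟨j, rfl⟩ := σ.symm.surjective i
    fin_cases j
    · simp [hδδ]
    · rw [← h]
      simp only [Fin.mk_one, Equiv.apply_symm_apply, Matrix.cons_val]
      rw [← hδδ (σ.symm 1) (a (σ.symm 1))]
      congr 1
      rw [hδδ]
      ring
    · simp [hδδ]
  refine Nat.card_congr ⟨fun a => ⟨(δ (σ.symm 0) * a.1 (σ.symm 0),
    δ (σ.symm 2) * a.1 (σ.symm 2)), ?_⟩,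
    fun x => ⟨fun i => δ i * ![x.1.1, k - x.1.1 - x.1.2, x.1.2] (σ i), x.2.2, ?_, ?_⟩, ?_, ?_⟩
  · obtain ⟨a, hR, ha, hk⟩ := a
    have h := hsum a ha hk
    have h1 := ha (σ.symm 1)
    refine ⟨⟨ha _, ha _, ?_⟩, ?_⟩
    · simp only
      linarith
    · simp only
      rwa [hrec a ha hk]
  · obtain ⟨⟨p, q⟩, ⟨hp, hq, hpq⟩, -⟩ := x
    intro i
    rw [hδδ]
    simp only at hp hq hpq ⊢
    generalize σ i = j
    fin_cases j <;> simp <;> omega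
  · obtain ⟨⟨p, q⟩, ⟨hp, hq, hpq⟩, -⟩ := x
    simp only at hp hq hpq ⊢
    have : ∀ i z, (δ i * z).natAbs = z.natAbs := by
      intro i z
      rcases hδ i with h | h <;> simp [h]
    simp only [this]
    rw [Equiv.sum_comp σ (fun j => (![p, k - p - q, q] j).natAbs), Fin.sum_univ_three]
    simp only [Matrix.cons_val]
    omega
  · rintro ⟨a, hR, ha, hk⟩
    exact Subtype.ext (hrec a ha hk)
  · rintro ⟨⟨p, q⟩, h⟩
    ext <;> simp [hδδ]

/-- Octants in which one coordinate, of absolute value `p`, has the sign opposite to the others. -/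
theorem natCard_triangle_mixed (r t k : ℕ) (hr : 1 ≤ r) (ht : 1 ≤ t) (A B u : ℤ)
    (hu : ∀ m : ℤ, ∃ y, (r : ℤ) ∣ u * y - 2 * m) :
    Nat.card {x : ℤ × ℤ // (0 < x.1 ∧ 0 < x.2 ∧ x.1 + x.2 < k) ∧
        (r : ℤ) ^ 2 * t ∣ (k - 2 * x.1) + r * t * (A + B * x.1 + u * x.2)} =
      Nat.card {x : ℤ × ℤ // (0 < x.1 ∧ 0 < x.2 ∧ x.1 + x.2 < k) ∧
        (r : ℤ) ^ 2 * t ∣ (k - 2 * x.1) - r * t * (A + B * x.1 + u * x.2)} := by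
  have hrt : (r * t : ℤ) ≠ 0 := by positivity
  have hsq : (r : ℤ) ^ 2 * t = r * t * r := by ring
  have key : ∀ m X : ℤ, (r : ℤ) ^ 2 * t ∣ r * t * m + r * t * X ↔ (r : ℤ) ∣ m + X := by
    intro m X
    rw [hsq, ← mul_add]
    exact mul_dvd_mul_iff_left hrt
  have hdvd : ∀ z X : ℤ, (r : ℤ) ^ 2 * t ∣ z + r * t * X → (r * t : ℤ) ∣ z := by
    intro z X h
    rw [hsq] at h
    exact (dvd_add_left (dvd_mul_right _ _)).1 ((dvd_mul_right _ _).trans h)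
  set f : ℤ → ℤ → ℤ := fun p q =>
    if (r : ℤ) ^ 2 * t ∣ (k - 2 * p) + r * t * (A + B * p + u * q) then 1 else 0 with hf
  set g : ℤ → ℤ → ℤ := fun p q =>
    if (r : ℤ) ^ 2 * t ∣ (k - 2 * p) - r * t * (A + B * p + u * q) then 1 else 0 with hg
  have hsub : ∀ z X : ℤ, z - r * t * X = z + r * t * (-X) := by intros; ring
  have hfg : ∀ p q, g (k - p) q = f p q := by
    intro p q
    simp only [hf, hg]
    refine if_congr ?_ rfl rfl
    by_cases h : (r * t : ℤ) ∣ k - 2 * p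
    · obtain ⟨m, hm⟩ := h
      have hp : (k : ℤ) - 2 * (k - p) = r * t * (-m) := by linear_combination -hm
      rw [hsub, hp, hm, key, key, ← dvd_neg]
      have : -(-m + -(A + B * (k - p) + u * q)) =
          (m + (A + B * p + u * q)) + r * (B * t * m) := by linear_combination B * hm
      rw [this]
      exact dvd_add_left (dvd_mul_right _ _)
    · refine ⟨fun h' => (h ?_).elim, fun h' => (h (hdvd _ _ h')).elim⟩
      rw [hsub] at h'
      have := hdvd _ _ h'
      rw [← dvd_neg] at this
      rwa [show -((k : ℤ) - 2 * (k - p)) = k - 2 * p by ring] at this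
  have hgf : ∀ p q, f (k - p) q = g p q := by
    intro p q
    rw [← hfg, sub_sub_cancel]
  have window : ∀ p : ℤ, 2 * p ≤ k → ∑ q ∈ Ico p (k - p), f p q = ∑ q ∈ Ico p (k - p), g p q := by
    intro p hp
    by_cases h : (r * t : ℤ) ∣ k - 2 * p
    · obtain ⟨m, hm⟩ := h
      obtain ⟨y, c, hc⟩ := hu m
      have hend : (k : ℤ) - p = p + (k - 2 * p) := by ring
      rw [hend, ← sum_Ico_shift_of_periodic (f := g p) (by omega) ?_ p y]
      · refine sum_congr rfl fun q _ => ?_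
        simp only [hf, hg]
        refine if_congr ?_ rfl rfl
        rw [hsub, hm, key, key, ← dvd_neg (b := m + -_)]
        have : -(m + -(A + B * p + u * (q + y))) = (m + (A + B * p + u * q)) + r * c := by
          linear_combination hc
        rw [this]
        exact (dvd_add_left (dvd_mul_right _ _)).symm
      · intro q
        simp only [hg]
        refine if_congr ?_ rfl rfl
        rw [hsub, hsub, hm, key, key]
        have : m + -(A + B * p + u * (q + r * t * m)) =
            (m + -(A + B * p + u * q)) + r * (-u * t * m) := by ring
        rw [this]
        exact dvd_add_left (dvd_mul_right _ _)
    · refine sum_congr rfl fun q _ => ?_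
      simp only [hf, hg]
      rw [if_neg fun h' => h (hdvd _ _ h'), if_neg fun h' => h (hdvd _ _ (by rwa [hsub] at h'))]
  have split : ∀ (F : ℤ → ℤ) (p : ℤ), 1 ≤ p → 2 * p ≤ k →
      ∑ q ∈ Ico 1 (k - p), F q = ∑ q ∈ Ico 1 p, F q + ∑ q ∈ Ico p (k - p), F q := by
    intro F p h1 h2
    rw [← sum_union]
    · congr 1
      ext z
      simp only [mem_union, mem_Ico]
      omega
    · rw [disjoint_left]
      intro z
      simp only [mem_Ico]
      omega
  have pair_le : ∀ p : ℤ, 1 ≤ p → 2 * p ≤ k →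
      ∑ q ∈ Ico 1 (k - p), f p q + ∑ q ∈ Ico 1 (k - (k - p)), f (k - p) q =
        ∑ q ∈ Ico 1 (k - p), g p q + ∑ q ∈ Ico 1 (k - (k - p)), g (k - p) q := by
    intro p h1 h2
    simp only [hfg, hgf, sub_sub_cancel]
    rw [split _ p h1 h2, split _ p h1 h2, window p h2]
    ring
  have pair : ∀ p ∈ Ico 1 (k : ℤ),
      ∑ q ∈ Ico 1 (k - p), f p q + ∑ q ∈ Ico 1 (k - (k - p)), f (k - p) q =
        ∑ q ∈ Ico 1 (k - p), g p q + ∑ q ∈ Ico 1 (k - (k - p)), g (k - p) q := by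
    intro p hp
    rw [mem_Ico] at hp
    rcases le_total (2 * p) k with h | h
    · exact pair_le p hp.1 h
    · have := pair_le (k - p) (by omega) (by omega)
      simp only [sub_sub_cancel] at this ⊢
      linarith
  have refl : ∀ F : ℤ → ℤ, ∑ p ∈ Ico 1 (k : ℤ), F (k - p) = ∑ p ∈ Ico 1 (k : ℤ), F p := by
    intro F
    refine sum_nbij' (k - ·) (k - ·) ?_ ?_ ?_ ?_ ?_ <;> simp <;> intros <;> omega
  have total := sum_congr rfl pair
  simp only [sum_add_distrib] at total
  rw [refl fun p => ∑ q ∈ Ico 1 (k - p), f p q, refl fun p => ∑ q ∈ Ico 1 (k - p), g p q] at total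
  zify
  rw [natCard_triangle_eq_sum k fun p q =>
      (r : ℤ) ^ 2 * t ∣ (k - 2 * p) + r * t * (A + B * p + u * q),
    natCard_triangle_eq_sum k fun p q =>
      (r : ℤ) ^ 2 * t ∣ (k - 2 * p) - r * t * (A + B * p + u * q)]
  linarith

/-- Up to the indicator of `j ≡ 0`, the number of points of the open triangle of size `n` with
`s + 2 * c ≡ j` modulo `r` depends only on the parity of `j`. -/
theorem sum_triangle_sub_two {r : ℕ} (h3 : ¬ 3 ∣ r) {n : ℕ} (hn : (r : ℤ) ∣ n) (hpos : 0 < n)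
    (j : ℤ) :
    (∑ s ∈ Ico 1 (n : ℤ), ∑ c ∈ Ico 1 s, if (r : ℤ) ∣ s + 2 * c - j then (1 : ℤ) else 0) -
        (if (r : ℤ) ∣ j then 1 else 0) =
      (∑ s ∈ Ico 1 (n : ℤ), ∑ c ∈ Ico 1 s, if (r : ℤ) ∣ s + 2 * c - (j - 2) then (1 : ℤ) else 0) -
        (if (r : ℤ) ∣ j - 2 then 1 else 0) := by
  set F : ℤ → ℤ := fun x => if (r : ℤ) ∣ x - j then 1 else 0 with hF
  have hper : ∀ x z, F (x + r * z) = F x := by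
    intro x z
    simp only [hF]
    refine if_congr ?_ rfl rfl
    rw [add_sub_right_comm]
    exact dvd_add_left (dvd_mul_right _ _)
  obtain ⟨d, hd⟩ := hn
  have telescope : ∀ (φ : ℤ → ℤ) (s : ℕ),
      ∑ c ∈ Ico 1 ((s : ℤ) + 1), φ c - ∑ c ∈ Ico 1 ((s : ℤ) + 1), φ (c + 1) =
        φ 1 - φ (s + 1) := by
    intro φ s
    induction s with
    | zero => simp
    | succ s ih =>
      have : Ico 1 (((s + 1 : ℕ) : ℤ) + 1) = insert ((s : ℤ) + 1) (Ico 1 ((s : ℤ) + 1)) := by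
        ext z
        simp only [mem_insert, mem_Ico]
        omega
      rw [this, sum_insert (by simp), sum_insert (by simp)]
      push_cast
      linarith
  have rows : ∀ s ∈ Ico 1 (n : ℤ),
      ∑ c ∈ Ico 1 s, F (s + 2 * c) - ∑ c ∈ Ico 1 s, F (s + 2 * c + 2) = F (s + 2) - F (3 * s) := by
    intro s hs
    rw [mem_Ico] at hs
    obtain ⟨i, rfl⟩ : ∃ i : ℕ, s = i + 1 := ⟨(s - 1).toNat, by omega⟩
    have := telescope (fun c => F ((i + 1 : ℤ) + 2 * c)) i
    convert this using 2
    · refine sum_congr rfl fun c _ => ?_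
      ring_nf
    · congr 1
    · congr 1
      ring
  have complete : ∑ s ∈ Ico 0 (n : ℤ), F (s + 2) = ∑ s ∈ Ico 0 (n : ℤ), F (3 * s) := by
    have hcop : IsCoprime (3 : ℤ) r := by
      have := (Nat.Prime.coprime_iff_not_dvd Nat.prime_three).2 h3
      exact_mod_cast Nat.isCoprime_iff_coprime.2 this
    obtain ⟨y, z, hyz⟩ := hcop
    have hpern : ∀ x, F (x + n) = F x := by
      intro x
      rw [hd, hper]
    have h₁ := sum_Ico_shift_of_periodic (f := F) (Int.natCast_nonneg n) hpern 0 2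
    have h₂ := sum_Ico_shift_of_periodic (f := F) (Int.natCast_nonneg n) hpern 0 (j - y * j)
    rw [zero_add] at h₁ h₂
    rw [h₁, ← h₂]
    refine sum_congr rfl fun s _ => ?_
    simp only [hF]
    refine if_congr ?_ rfl rfl
    constructor
    · rintro ⟨c, hc⟩
      exact ⟨3 * c - z * j, by linear_combination 3 * hc + j * hyz⟩
    · rintro ⟨c, hc⟩
      exact ⟨y * c + z * s, by linear_combination y * hc - s * hyz⟩
  have hins : Ico 0 (n : ℤ) = insert 0 (Ico 1 (n : ℤ)) := by
    ext z
    simp only [mem_insert, mem_Ico]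
    omega
  rw [hins, sum_insert (by simp), sum_insert (by simp)] at complete
  have total := sum_congr rfl rows
  rw [sum_sub_distrib, sum_sub_distrib] at total
  have e0 : (if (r : ℤ) ∣ j then (1 : ℤ) else 0) = F (3 * 0) := by simp [hF]
  have e2 : (if (r : ℤ) ∣ j - 2 then (1 : ℤ) else 0) = F (0 + 2) := by
    simp only [hF]
    refine if_congr ?_ rfl rfl
    rw [← dvd_neg, neg_sub, zero_add]
  have e : ∀ s c : ℤ, (if (r : ℤ) ∣ s + 2 * c - (j - 2) then (1 : ℤ) else 0) =
      F (s + 2 * c + 2) := by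
    intro s c
    simp only [hF]
    ring_nf
  simp only [e, e0, e2]
  linarith

/-- The octants in which all coordinates have the same sign. -/
theorem natCard_triangle_definite (r t k : ℕ) (hr : 1 ≤ r) (ht : 1 ≤ t) (h3 : ¬ 3 ∣ r) :
    Nat.card {x : ℤ × ℤ // (0 < x.1 ∧ 0 < x.2 ∧ x.1 + x.2 < k) ∧
        (r : ℤ) ^ 2 * t ∣ k + r * t * (k - x.1 + 2 * x.2)} =
      Nat.card {x : ℤ × ℤ // (0 < x.1 ∧ 0 < x.2 ∧ x.1 + x.2 < k) ∧
        (r : ℤ) ^ 2 * t ∣ k - r * t * (k - x.1 + 2 * x.2)} := by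
  have hrt : (r * t : ℤ) ≠ 0 := by positivity
  have hsq : (r : ℤ) ^ 2 * t = r * t * r := by ring
  rcases Nat.eq_zero_or_pos k with rfl | hk
  · refine Nat.card_congr (Equiv.subtypeEquivRight fun x => ?_)
    constructor <;> rintro ⟨h, -⟩ <;> push_cast at h <;> omega
  by_cases h : (r * t : ℤ) ∣ k
  · obtain ⟨m, hm⟩ := h
    set N : ℤ → ℤ := fun j => (∑ s ∈ Ico 1 (k : ℤ), ∑ c ∈ Ico 1 s,
      if (r : ℤ) ∣ s + 2 * c - j then (1 : ℤ) else 0) - (if (r : ℤ) ∣ j then 1 else 0) with hN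
    have hstep : ∀ j, N j = N (j - 2) := fun j =>
      sum_triangle_sub_two h3 ⟨t * m, by rw [hm]; ring⟩ hk j
    have heven : ∀ i j : ℤ, N (j + 2 * i) = N j := by
      intro i j
      induction i using Int.induction_on with
      | zero => simp
      | succ i ih => rw [← ih, hstep]; ring_nf
      | pred i ih => rw [← ih, hstep (j + 2 * -i)]; ring_nf
    have hNm := heven m (-m)
    rw [show -m + 2 * m = m by ring] at hNm
    simp only [hN, dvd_neg, sub_left_inj] at hNm
    have refl : ∀ F : ℤ → ℤ, ∑ p ∈ Ico 1 (k : ℤ), F (k - p) = ∑ p ∈ Ico 1 (k : ℤ), F p := by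
      intro F
      refine sum_nbij' (k - ·) (k - ·) ?_ ?_ ?_ ?_ ?_ <;> simp <;> intros <;> omega
    rw [← refl fun s => ∑ c ∈ Ico 1 s, if (r : ℤ) ∣ s + 2 * c - m then 1 else 0,
      ← refl fun s => ∑ c ∈ Ico 1 s, if (r : ℤ) ∣ s + 2 * c - -m then 1 else 0] at hNm
    zify
    rw [natCard_triangle_eq_sum k fun p q => (r : ℤ) ^ 2 * t ∣ k + r * t * (k - p + 2 * q),
      natCard_triangle_eq_sum k fun p q => (r : ℤ) ^ 2 * t ∣ k - r * t * (k - p + 2 * q)]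
    have hplus : ∀ X : ℤ, (r : ℤ) ^ 2 * t ∣ k + r * t * X ↔ (r : ℤ) ∣ X - -m := by
      intro X
      rw [hm, hsq, ← mul_add, mul_dvd_mul_iff_left hrt]
      ring_nf
    have hminus : ∀ X : ℤ, (r : ℤ) ^ 2 * t ∣ k - r * t * X ↔ (r : ℤ) ∣ X - m := by
      intro X
      rw [hm, hsq, ← mul_sub, mul_dvd_mul_iff_left hrt, ← dvd_neg, neg_sub]
    simp only [hplus, hminus]
    exact hNm.symm
  · refine Nat.card_congr (Equiv.subtypeEquivRight fun x => ?_)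
    have hno : ∀ X : ℤ, ¬ (r : ℤ) ^ 2 * t ∣ k + r * t * X := by
      intro X h'
      rw [hsq] at h'
      exact h ((dvd_add_left (dvd_mul_right _ _)).1 ((dvd_mul_right _ _).trans h'))
    have hno' := hno (-(k - x.1 + 2 * x.2))
    rw [mul_neg, ← sub_eq_add_neg] at hno'
    simp only [hno, hno', and_false]

/-- For `r` not divisible by `3`, the lattices `𝓛(r²t; 1, 1+rt, 1+3rt)` and
`𝓛(r²t; 1, 1-rt, 1-3rt)` contain the same number of points of one-norm `k` in each open
octant prescribed by a sign pattern `δ ∈ {±1}³`. -/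
theorem congLat_octant_counts_eq (r t : ℕ) (hr : 1 ≤ r) (ht : 1 ≤ t)
    (h3 : ¬ (3 ∣ r)) (k : ℕ) (δ : Fin 3 → ℤ) (hδ : ∀ i, δ i = 1 ∨ δ i = -1) :
    Nat.card {a : Fin 3 → ℤ //
        a ∈ congLat (r ^ 2 * t) 3 ![(1 : ℤ), 1 + (r : ℤ) * t, 1 + 3 * (r : ℤ) * t] ∧
        (∀ i, 0 < δ i * a i) ∧ (∑ i, (a i).natAbs) = k} =
    Nat.card {a : Fin 3 → ℤ //
        a ∈ congLat (r ^ 2 * t) 3 ![(1 : ℤ), 1 - (r : ℤ) * t, 1 - 3 * (r : ℤ) * t] ∧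
        (∀ i, 0 < δ i * a i) ∧ (∑ i, (a i).natAbs) = k} := by
  have hcop : IsCoprime (3 : ℤ) r := by
    have := (Nat.Prime.coprime_iff_not_dvd Nat.prime_three).2 h3
    exact_mod_cast Nat.isCoprime_iff_coprime.2 this
  have transfer : ∀ (σ : Equiv.Perm (Fin 3)) (ε : ℤ) (S X : ℤ × ℤ → ℤ), ε = 1 ∨ ε = -1 →
      (∀ x : ℤ × ℤ, ∑ i, δ i * ![x.1, k - x.1 - x.2, x.2] (σ i) = ε * S x) →
      (∀ x : ℤ × ℤ, δ 1 * ![x.1, k - x.1 - x.2, x.2] (σ 1) +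
        3 * (δ 2 * ![x.1, k - x.1 - x.2, x.2] (σ 2)) = ε * X x) →
      Nat.card {x : ℤ × ℤ // (0 < x.1 ∧ 0 < x.2 ∧ x.1 + x.2 < k) ∧
          (r : ℤ) ^ 2 * t ∣ S x + r * t * X x} =
        Nat.card {x : ℤ × ℤ // (0 < x.1 ∧ 0 < x.2 ∧ x.1 + x.2 < k) ∧
          (r : ℤ) ^ 2 * t ∣ S x - r * t * X x} →
      Nat.card {a : Fin 3 → ℤ //
        a ∈ congLat (r ^ 2 * t) 3 ![(1 : ℤ), 1 + (r : ℤ) * t, 1 + 3 * (r : ℤ) * t] ∧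
        (∀ i, 0 < δ i * a i) ∧ (∑ i, (a i).natAbs) = k} =
      Nat.card {a : Fin 3 → ℤ //
        a ∈ congLat (r ^ 2 * t) 3 ![(1 : ℤ), 1 - (r : ℤ) * t, 1 - 3 * (r : ℤ) * t] ∧
        (∀ i, 0 < δ i * a i) ∧ (∑ i, (a i).natAbs) = k} := by
    intro σ ε S X hε hS hX heq
    have hdvd : ∀ a b : ℤ, a = ε * b → ((r : ℤ) ^ 2 * t ∣ b ↔ (r : ℤ) ^ 2 * t ∣ a) := by
      rintro a b rfl
      rcases hε with rfl | rfl <;> simp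
    rw [natCard_octant_eq_natCard_triangle k δ hδ _ σ,
      natCard_octant_eq_natCard_triangle k δ hδ _ σ]
    convert heq using 4 with x x
    all_goals
      simp only [congLat, Set.mem_ofPred_eq]
      push_cast
      refine and_congr_right fun _ => (hdvd _ _ ?_).symm
      have h₁ := hS x
      have h₂ := hX x
      rw [Fin.sum_univ_three] at h₁ ⊢
      simp only [Matrix.cons_val]
    · linear_combination h₁ + r * t * h₂
    · linear_combination h₁ - r * t * h₂
  have definite := natCard_triangle_definite r t k hr ht h3
  have first := natCard_triangle_mixed r t k hr ht k (-1) 2 fun m => ⟨m, by simp⟩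
  have second := natCard_triangle_mixed r t k hr ht 0 (-1) 3 fun m => by
    obtain ⟨y, z, h⟩ := hcop
    exact ⟨2 * m * y, -2 * m * z, by linear_combination 2 * m * h⟩
  have third := natCard_triangle_mixed r t k hr ht k (-4) (-1) fun m => ⟨-2 * m, by simp⟩
  have swap01 : Equiv.swap (0 : Fin 3) 1 2 = 2 := by decide
  have swap02 : Equiv.swap (0 : Fin 3) 2 1 = 1 := by decide
  rcases hδ 0 with h0 | h0 <;> rcases hδ 1 with h1 | h1 <;> rcases hδ 2 with h2 | h2
  · refine transfer 1 1 _ _ (by simp) ?_ ?_ definite <;> intro x <;>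
      simp [Fin.sum_univ_three, h0, h1, h2] <;> ring
  · refine transfer (Equiv.swap 0 2) 1 _ _ (by simp) ?_ ?_ third <;> intro x <;>
      simp [Fin.sum_univ_three, h0, h1, h2, swap02] <;> ring
  · refine transfer (Equiv.swap 0 1) 1 _ _ (by simp) ?_ ?_ second <;> intro x <;>
      simp [Fin.sum_univ_three, h0, h1, h2, swap01] <;> ring
  · refine transfer 1 (-1) _ _ (by simp) ?_ ?_ first <;> intro x <;>
      simp [Fin.sum_univ_three, h0, h1, h2] <;> ring
  · refine transfer 1 1 _ _ (by simp) ?_ ?_ first <;> intro x <;>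
      simp [Fin.sum_univ_three, h0, h1, h2] <;> ring
  · refine transfer (Equiv.swap 0 1) (-1) _ _ (by simp) ?_ ?_ second <;> intro x <;>
      simp [Fin.sum_univ_three, h0, h1, h2, swap01] <;> ring
  · refine transfer (Equiv.swap 0 2) (-1) _ _ (by simp) ?_ ?_ third <;> intro x <;>
      simp [Fin.sum_univ_three, h0, h1, h2, swap02] <;> ring
  · refine transfer 1 (-1) _ _ (by simp) ?_ ?_ definite <;> intro x <;>
      simp [Fin.sum_univ_three, h0, h1, h2] <;> ring
end
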